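/- arXiv:2007.04675 — 3 statements merged into one kernel-verified Lean document; each statement's English description precedes it below -/
import Mathlib

section
/- Fix b = 1/5 and c = 57/10, and let a < 0 be any negative real number. Let s = √(c² − 4ab), k = (c − s)/(2a), and let p₁ = (k a, −k, k) be the corresponding equilibrium of the Rössler vector field. Let J = [[0, −1, −1], [1, a, 0], [k, 0, k a − c]] be the Jacobian matrix of the Rössler vector field at p₁. Then every complex root μ of the characteristic polynomial of J (viewed over ℂ) satisfies Re(μ) < 0; in particular p₁ is a linearly (exponentially) stable hyperbolic equilibrium. -/
/-!
With `d = k a - c`, the characteristic polynomial of `J` at `μ` is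
`μ (μ - a) (μ - d) + (μ - d) + k (μ - a)`, where `a < 0`, `d < 0` and `k > 0`.
Off `a` and `d`, a root therefore satisfies `μ + 1/(μ - a) + k/(μ - d) = 0`. If `0 ≤ Re μ`, then
`μ - a` and `μ - d` lie in the open right half-plane, and so do their inverses; the left-hand side
then has positive real part, a contradiction.
-/

theorem re_inv_pos {z : ℂ} (hz : 0 < z.re) : 0 < (z⁻¹).re := by
  have hz0 : z ≠ 0 := by
    rintro rfl
    simp at hz
  rw [Complex.inv_re]
  exact div_pos hz (Complex.normSq_pos.mpr hz0)

/-- The half-plane argument: it uses only the signs of `a`, `d` and `k`. -/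
theorem re_neg_of_cubic_eq_zero {a d k : ℝ} (ha : a < 0) (hd : d < 0) (hk : 0 < k) {μ : ℂ}
    (h : μ * (μ - a) * (μ - d) + (μ - d) + k * (μ - a) = 0) : μ.re < 0 := by
  by_contra! hμ
  have hA : 0 < (μ - a).re := by simp; linarith
  have hD : 0 < (μ - d).re := by simp; linarith
  have hA0 : μ - a ≠ 0 := fun h0 => by simp [h0] at hA
  have hD0 : μ - d ≠ 0 := fun h0 => by simp [h0] at hD
  have key : μ + (μ - a)⁻¹ + k * (μ - d)⁻¹ = 0 := by
    field_simp
    linear_combination h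
  have hre := congrArg Complex.re key
  rw [Complex.add_re, Complex.add_re, Complex.re_ofReal_mul, Complex.zero_re] at hre
  have h1 := re_inv_pos hA
  have h2 := mul_pos hk (re_inv_pos hD)
  linarith

/-- For `b = 1/5`, `c = 57/10` and any `a < 0`, the equilibrium
`p₁ = (k a, -k, k)` of the Rössler system, with `k = (c - √(c² - 4ab))/(2a)`,
is linearly stable: every complex root `μ` of the characteristic polynomial of
the Jacobian matrix `J = [[0, -1, -1], [1, a, 0], [k, 0, k a - c]]` satisfies
`Re μ < 0`. -/
theorem rossler_equilibrium_linearly_stable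
    (a : ℝ) (ha : a < 0)
    (b c : ℝ) (hb : b = 1 / 5) (hc : c = 57 / 10)
    (s : ℝ) (hs : s = Real.sqrt (c ^ 2 - 4 * a * b))
    (k : ℝ) (hk : k = (c - s) / (2 * a))
    (J : Matrix (Fin 3) (Fin 3) ℝ)
    (hJ : J = !![(0 : ℝ), -1, -1; 1, a, 0; k, 0, k * a - c]) :
    ∀ μ : ℂ, (Polynomial.aeval μ) (Matrix.charpoly J) = 0 → μ.re < 0 := by
  intro μ hμ
  have hc0 : 0 < c := by rw [hc]; norm_num
  have hb0 : 0 < b := by rw [hb]; norm_num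
  have hcs : c < s := by
    rw [hs]
    apply Real.lt_sqrt_of_sq_lt
    nlinarith [mul_pos_of_neg_of_neg ha (neg_lt_zero.mpr hb0)]
  have hk0 : 0 < k := by
    rw [hk]
    exact div_pos_of_neg_of_neg (by linarith) (by linarith)
  have hd : k * a - c < 0 := by
    linarith [mul_neg_of_pos_of_neg hk0 ha]
  refine re_neg_of_cubic_eq_zero ha hd hk0 ?_
  rw [hJ, Matrix.charpoly, Matrix.det_fin_three] at hμ
  simp at hμ
  push_cast
  linear_combination hμ
end

section
/- Let f : ℝⁿ × ℝ → ℝⁿ be continuous and assume there is L ≥ 0 such that x ↦ f(x, λ) is L-Lipschitz for every λ ∈ ℝ. Let Λ : ℝ → ℝ be continuous with Λ(t) → λ₊ as t → +∞. Let Φ : ℝ × ℝ × ℝⁿ → ℝⁿ be the solution process of the nonautonomous equation ẋ = f(x, Λ(t)), i.e. Φ(s, s, x) = x for all s, x, and for each fixed s, x the map t ↦ Φ(t, s, x) is differentiable with derivative f(Φ(t, s, x), Λ(t)) at every t. Let ψ : ℝ × ℝⁿ → ℝⁿ be the flow of the future limit system ẋ = f(x, λ₊), i.e. ψ(0, x)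 = x and t ↦ ψ(t, x) has derivative f(ψ(t, x), λ₊) at every t. Suppose M : ℝ → Set ℝⁿ is a nonautonomous set whose fibres are nonempty, Φ-invariant in the sense that Φ(t, s, M(s)) = M(t) for all s, t ∈ ℝ, and uniformly bounded: there is a compact set K ⊆ ℝⁿ with M(t) ⊆ K for all t. Then the upper forward limit M₊∞ = ⋂_{τ ∈ ℝ} closure(⋃_{t ≥ τ} M(t)) is invariant under the future limit flow: ψ(t, M₊∞) = M₊∞ for every t ∈ ℝ. -/
/-!
Solutions of `ẋ = f(x, Λ(t))` that start late and stay in the compact set `K` are approximate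
solutions of `ẋ = f(x, λ₊)`, because `f(·, Λ(t)) → f(·, λ₊)` uniformly on `K`. If `x ∈ M₊∞`, then `x`
is approximated by points `z ∈ M(s)` with `s` arbitrarily large, and Grönwall's inequality makes
`Φ(s + t, s, z) ∈ M(s + t)` close to `ψ(t, x)`; hence `ψ(t, M₊∞) ⊆ M₊∞` for every real `t`. Applying
this to `-t` and using the group property `ψ(t, ψ(-t, y)) = y` (`flow_apply_neg`) gives equality.

Both signs of `t` are treated at once by rescaling time: `r ↦ a(s + t r)` on `[0, 1]` solves an
equation whose right-hand side is multiplied by `t`.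
-/

open Filter

section

variable {E : Type*} [NormedAddCommGroup E] [NormedSpace ℝ E]

theorem lipschitzWith_smul_field {g : E → E} {L : NNReal} (hg : LipschitzWith L g) (t : ℝ) :
    LipschitzWith (‖t‖₊ * L) (fun x => t • g x) :=
  (lipschitzWith_smul t).comp hg

theorem hasDerivAt_rescale {a : ℝ → E} {a' : E} {s t r : ℝ} (h : HasDerivAt a a' (s + t * r)) :
    HasDerivAt (fun q => a (s + t * q)) (t • a') r := by
  have h1 : HasDerivAt (fun q : ℝ => s + t * q) t r := by
    simpa using ((hasDerivAt_id r).const_mul t).const_add s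
  exact h.scomp r h1

theorem flow_apply_neg {g : E → E} {L : NNReal} (hg : LipschitzWith L g) {ψ : ℝ → E → E}
    (hψ0 : ∀ x, ψ 0 x = x) (hψ' : ∀ x t, HasDerivAt (fun u => ψ u x) (g (ψ t x)) t)
    (t : ℝ) (y : E) : ψ t (ψ (-t) y) = y := by
  have ha : ∀ r, HasDerivAt (fun q => ψ (0 + t * q) (ψ (-t) y))
      (t • g (ψ (0 + t * r) (ψ (-t) y))) r := fun r => hasDerivAt_rescale (hψ' _ _)
  have hb : ∀ r, HasDerivAt (fun q => ψ (-t + t * q) y) (t • g (ψ (-t + t * r) y)) r :=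
    fun r => hasDerivAt_rescale (a := fun u => ψ u y) (hψ' _ _)
  have := dist_le_of_trajectories_ODE (v := fun _ x => t • g x) (a := 0) (b := 1) (δ := 0)
    (fun _ => lipschitzWith_smul_field hg t)
    (fun r _ => (ha r).continuousAt.continuousWithinAt) (fun r _ => (ha r).hasDerivWithinAt)
    (fun r _ => (hb r).continuousAt.continuousWithinAt) (fun r _ => (hb r).hasDerivWithinAt)
    (by simp [hψ0]) 1 (by simp)
  simpa [hψ0] using this

/-- Grönwall estimate in rescaled time: a curve `a` whose velocity along the segment from `s` to
`s + t` is within `η` of `g ∘ a`, and which starts within `η` of a solution `b` of `ẋ = g(x)`, stays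
within a bound that tends to `0` with `η`. -/
theorem dist_le_gronwallBound_rescale {g : E → E} {L : NNReal} (hg : LipschitzWith L g)
    {a a' b : ℝ → E} {s t η : ℝ} (ha : ∀ u, HasDerivAt a (a' u) u)
    (hb : ∀ u, HasDerivAt b (g (b u)) u)
    (happrox : ∀ r ∈ Set.Icc (0 : ℝ) 1, dist (a' (s + t * r)) (g (a (s + t * r))) ≤ η)
    (h0 : dist (a s) (b 0) ≤ η) :
    dist (a (s + t)) (b t) ≤ gronwallBound η (‖t‖₊ * L : NNReal) (|t| * η) 1 := by
  have ha1 : ∀ r, HasDerivAt (fun q => a (s + t * q)) (t • a' (s + t * r)) r :=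
    fun r => hasDerivAt_rescale (ha _)
  have hb1 : ∀ r, HasDerivAt (fun q => b (0 + t * q)) (t • g (b (0 + t * r))) r :=
    fun r => hasDerivAt_rescale (hb _)
  have := dist_le_of_approx_trajectories_ODE (v := fun _ x => t • g x) (a := 0) (b := 1) (δ := η)
    (εf := |t| * η) (εg := 0)
    (fun _ => lipschitzWith_smul_field hg t)
    (fun r _ => (ha1 r).continuousAt.continuousWithinAt) (fun r _ => (ha1 r).hasDerivWithinAt)
    (fun r hr => by
      rw [dist_smul₀, Real.norm_eq_abs]
      exact mul_le_mul_of_nonneg_left (happrox r ⟨hr.1, hr.2.le⟩) (abs_nonneg t))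
    (fun r _ => (hb1 r).continuousAt.continuousWithinAt) (fun r _ => (hb1 r).hasDerivWithinAt)
    (fun r _ => by simp)
    (by simpa using h0) 1 (by simp)
  simpa using this

theorem exists_pos_gronwallBound_lt (K c : ℝ) {ε : ℝ} (hε : 0 < ε) :
    ∃ η > 0, gronwallBound η K (c * η) 1 < ε := by
  have hc : Continuous fun η : ℝ => gronwallBound η K (c * η) 1 := by
    by_cases h : K = 0
    · simp only [gronwallBound, h, if_true]; fun_prop
    · simp only [gronwallBound, h, if_false]; fun_prop
  have h0 : gronwallBound 0 K (c * 0) 1 < ε := by simpa [gronwallBound_ε0_δ0] using hε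
  have hev : ∀ᶠ η in nhds (0 : ℝ), gronwallBound η K (c * η) 1 < ε :=
    hc.continuousAt.eventually_lt continuousAt_const h0
  obtain ⟨η, h, hη⟩ := ((hev.filter_mono nhdsWithin_le_nhds).and
    (self_mem_nhdsWithin : Set.Ioi (0 : ℝ) ∈ nhdsWithin 0 (Set.Ioi 0))).exists
  exact ⟨η, hη, h⟩

theorem eventually_forall_dist_lt_of_isCompact {f : E → ℝ → E}
    (hf : Continuous fun p : E × ℝ => f p.1 p.2) {K : Set E} (hK : IsCompact K) (l : ℝ)
    {η : ℝ} (hη : 0 < η) : ∀ᶠ m in nhds l, ∀ x ∈ K, dist (f x m) (f x l) < η := by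
  refine hK.eventually_forall_of_forall_eventually fun x _ => ?_
  have hc : Continuous fun p : ℝ × E => dist (f p.2 p.1) (f p.2 l) :=
    (hf.comp (continuous_snd.prodMk continuous_fst)).dist
      (hf.comp (continuous_snd.prodMk continuous_const))
  exact hc.continuousAt.eventually_lt continuousAt_const (by simpa using hη)

end

/-- Invariance of the upper forward limit: if `M` is a `Φ`-invariant, uniformly
bounded nonautonomous set with nonempty fibres for the parameter shift system
`ẋ = f(x, Λ(t))`, where `Λ(t) → λ₊` as `t → ∞`, then the upper forward limit
`M₊∞ = ⋂_τ closure (⋃_{t ≥ τ} M(t))` is invariant under the flow `ψ` of the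
future limit system `ẋ = f(x, λ₊)`. -/
theorem upperForwardLimit_invariant_future_flow
    (n : ℕ)
    (f : EuclideanSpace ℝ (Fin n) → ℝ → EuclideanSpace ℝ (Fin n))
    (hfc : Continuous fun p : EuclideanSpace ℝ (Fin n) × ℝ => f p.1 p.2)
    (L : NNReal) (hfl : ∀ lam : ℝ, LipschitzWith L (fun x => f x lam))
    (Λ : ℝ → ℝ) (hΛc : Continuous Λ)
    (lamp : ℝ) (hΛlim : Tendsto Λ atTop (nhds lamp))
    (Φ : ℝ → ℝ → EuclideanSpace ℝ (Fin n) → EuclideanSpace ℝ (Fin n))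
    (hΦ0 : ∀ (s : ℝ) (x : EuclideanSpace ℝ (Fin n)), Φ s s x = x)
    (hΦ' : ∀ (s : ℝ) (x : EuclideanSpace ℝ (Fin n)) (t : ℝ),
      HasDerivAt (fun u => Φ u s x) (f (Φ t s x) (Λ t)) t)
    (ψ : ℝ → EuclideanSpace ℝ (Fin n) → EuclideanSpace ℝ (Fin n))
    (hψ0 : ∀ x : EuclideanSpace ℝ (Fin n), ψ 0 x = x)
    (hψ' : ∀ (x : EuclideanSpace ℝ (Fin n)) (t : ℝ),
      HasDerivAt (fun u => ψ u x) (f (ψ t x) lamp) t)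
    (M : ℝ → Set (EuclideanSpace ℝ (Fin n)))
    (hne : ∀ t : ℝ, (M t).Nonempty)
    (hinv : ∀ s t : ℝ, Φ t s '' M s = M t)
    (K : Set (EuclideanSpace ℝ (Fin n))) (hK : IsCompact K)
    (hMK : ∀ t : ℝ, M t ⊆ K) :
    ∀ t : ℝ, ψ t '' (⋂ τ : ℝ, closure (⋃ u ≥ τ, M u)) =
      ⋂ τ : ℝ, closure (⋃ u ≥ τ, M u) := by
  have key : ∀ t : ℝ, ∀ x ∈ ⋂ τ : ℝ, closure (⋃ u ≥ τ, M u),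
      ψ t x ∈ ⋂ τ : ℝ, closure (⋃ u ≥ τ, M u) := by
    intro t x hx
    refine Set.mem_iInter.2 fun τ => Metric.mem_closure_iff.2 fun ε hε => ?_
    obtain ⟨η, hη, hηε⟩ := exists_pos_gronwallBound_lt (‖t‖₊ * L : NNReal) |t| hε
    obtain ⟨T, hT⟩ := eventually_atTop.1
      (hΛlim.eventually (eventually_forall_dist_lt_of_isCompact hfc hK lamp hη))
    -- starting after `max T τ + |t|` keeps the whole time segment from `s` to `s + t` beyond both
    obtain ⟨z, hz, hxz⟩ := Metric.mem_closure_iff.1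
      (Set.mem_iInter.1 hx (max T τ + |t|)) η hη
    simp only [Set.mem_iUnion] at hz
    obtain ⟨s, hs, hzs⟩ := hz
    have hmem : ∀ u, Φ u s z ∈ M u := fun u => hinv s u ▸ Set.mem_image_of_mem _ hzs
    have hlate : ∀ r ∈ Set.Icc (0 : ℝ) 1, max T τ ≤ s + t * r := by
      intro r hr
      have h1 : |t * r| ≤ |t| := by
        rw [abs_mul, abs_of_nonneg hr.1]
        exact mul_le_of_le_one_right (abs_nonneg t) hr.2
      have h2 := neg_abs_le (t * r)
      linarith [hs.le]
    have hd := dist_le_gronwallBound_rescale (hfl lamp) (s := s) (t := t) (η := η)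
      (hΦ' s z) (hψ' x)
      (fun r hr => (hT _ ((le_max_left _ _).trans (hlate r hr)) _ (hMK _ (hmem _))).le)
      (by rw [hΦ0, hψ0, dist_comm]; exact hxz.le)
    refine ⟨Φ (s + t) s z, ?_, by rw [dist_comm]; exact hd.trans_lt hηε⟩
    simp only [Set.mem_iUnion]
    refine ⟨s + t, ?_, hmem _⟩
    simpa using (le_max_right _ _).trans (hlate 1 (by simp))
  intro t
  refine Set.Subset.antisymm ?_ fun y hy => ?_
  · rintro _ ⟨x, hx, rfl⟩
    exact key t x hx
  · exact ⟨ψ (-t) y, key (-t) y hy, flow_apply_neg (hfl lamp) hψ0 hψ' t y⟩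
end

section
/- Let f : ℝⁿ × ℝ → ℝⁿ be continuous, continuously differentiable in its first argument, and assume there is L ≥ 0 such that x ↦ f(x, λ) is L-Lipschitz for every λ ∈ ℝ. Let Λ : ℝ → ℝ be continuous with Λ(t) → λ₋ as t → −∞. Let X₋ ∈ ℝⁿ satisfy f(X₋, λ₋) = 0, and suppose the derivative of x ↦ f(x, λ₋) at X₋ is represented by a real n×n matrix A such that every complex eigenvalue μ of A (every complex root of the characteristic polynomial of A over ℂ) satisfies Re(μ) < 0. Then there exists a solution x : ℝ → ℝⁿ of the nonautonomous equation, i.e. x is differentiable with x'(t) = f(x(t), Λ(t)) for all t ∈ ℝ, such that x(t) → X₋ as t → −∞. -/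
/-!
The solution is a limit of solutions started near `Xm` at ever earlier times, trapped near `Xm` by
a quadratic Lyapunov function.

*Lyapunov function.* Since the spectrum of `A` is compact and lies in the open left half plane, the
Euler step `B = 1 + h A` has spectral radius less than one for small `h > 0`, so `B ^ k → 0` by
Gelfand's formula. Choose `N` with `‖B ^ N‖ < 1 / 2` and put `⟪P x, x⟫ = ∑_{k < N} ‖B ^ k x‖²`.
Telescoping gives `⟪P B x, B x⟫ ≤ ⟪P x, x⟫ - (3 / 4) ‖x‖²`; expanding `B = 1 + h A` and dropping the
nonnegative term `h² ⟪P A x, A x⟫` leaves `⟪P x, A x⟫ ≤ -c ‖x‖²` (`exists_lyapunov`). No matrix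
exponential or infinite sum is needed.

*Drift.* With `W x = ⟪P (x - Xm), x - Xm⟫`, differentiability at `Xm` and the uniform convergence of
`f · (Λ t)` to `f · lamm` on a compact ball give a level `r` such that, for each `η > 0`, the
derivative of `W` along solutions is at most a negative constant on `η ≤ W ≤ r` for all
sufficiently early times (`exists_drift`).

*Compactness.* Up to some time `T` the set `W ≤ r` is therefore forward invariant. The points `p`
whose solution through `(T, p)` satisfies `W ≤ r` at time `T - k` form a decreasing sequence of
nonempty compact sets; a common point yields a solution with `W ≤ r` on `(-∞, T]`. If `W` exceeded
some `η > 0` early enough along it, `W` would grow without bound backward in time, so `W → 0`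
(`exists_pullback_of_lyapunov`). Global solutions and their continuous dependence on data come from
Picard–Lindelöf with a step length depending only on the Lipschitz constant, and from Grönwall.
-/

open Filter

/-! ### Powers of the Euler step -/

theorem tendsto_pow_zero_of_spectralRadius_lt_one {𝔸 : Type*} [NormedRing 𝔸]
    [NormedAlgebra ℂ 𝔸] [CompleteSpace 𝔸] (a : 𝔸) (ha : spectralRadius ℂ a < 1) :
    Tendsto (fun k : ℕ => a ^ k) atTop (nhds 0) := by
  obtain ⟨r, har, hr1⟩ := ENNReal.lt_iff_exists_nnreal_btwn.mp ha
  have hr1' : r < 1 := by exact_mod_cast hr1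
  have hev := (spectrum.pow_nnnorm_pow_one_div_tendsto_nhds_spectralRadius a).eventually_lt_const har
  refine squeeze_zero_norm' (a := fun k : ℕ => (r : ℝ) ^ k) ?_
    (tendsto_pow_atTop_nhds_zero_of_lt_one r.2 (by exact_mod_cast hr1'))
  filter_upwards [hev, eventually_gt_atTop 0] with k hk hk0
  have hk' : (k : ℝ) ≠ 0 := by positivity
  have h1 : ((‖a ^ k‖₊ : ENNReal) ^ (1 / k : ℝ)) ^ (k : ℝ) ≤ (r : ENNReal) ^ (k : ℝ) :=
    ENNReal.rpow_le_rpow hk.le (by positivity)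
  rw [← ENNReal.rpow_mul, one_div_mul_cancel hk', ENNReal.rpow_one, ENNReal.rpow_natCast] at h1
  have h2 : ‖a ^ k‖₊ ≤ r ^ k := by exact_mod_cast h1
  exact_mod_cast h2

/-- If the spectrum of `a` lies in the open left half plane, a small explicit Euler step `1 + h a`
has spectrum in the open unit disc. -/
theorem exists_euler_pow_tendsto_zero {𝔸 : Type*} [NormedRing 𝔸]
    [NormedAlgebra ℂ 𝔸] [CompleteSpace 𝔸] (a : 𝔸) (ha : ∀ μ ∈ spectrum ℂ a, μ.re < 0) :
    ∃ h : ℝ, 0 < h ∧ Tendsto (fun k : ℕ => (1 + (h : ℂ) • a) ^ k) atTop (nhds 0) := by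
  rcases subsingleton_or_nontrivial 𝔸 with hs | hn
  · refine ⟨1, one_pos, ?_⟩
    rw [show (fun k : ℕ => (1 + ((1 : ℝ) : ℂ) • a) ^ k) = fun _ => 0 from
      funext fun _ => Subsingleton.elim _ _]
    exact tendsto_const_nhds
  have hcpt := spectrum.isCompact (𝕜 := ℂ) a
  obtain ⟨m, hm, hmax⟩ := hcpt.exists_isMaxOn (spectrum.nonempty a)
    Complex.continuous_re.continuousOn
  obtain ⟨R, hR⟩ := hcpt.isBounded.exists_norm_le
  have hδ : 0 < -m.re := by linarith [ha m hm]
  -- `|1 + hμ|² = 1 + 2h Re μ + h²|μ|² ≤ 1 - 2hδ + h²R² < 1` for this choice of `h`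
  set h : ℝ := -m.re / (R ^ 2 + 1) with hh
  have hpos : 0 < h := by positivity
  have hhR : h * (R ^ 2 + 1) = -m.re := by rw [hh]; field_simp
  refine ⟨h, hpos, tendsto_pow_zero_of_spectralRadius_lt_one _ ?_⟩
  have hspec : spectrum ℂ (1 + (h : ℂ) • a) =
      Set.image (fun k => 1 + (h : ℂ) * k) (spectrum ℂ a) := by
    have := spectrum.map_polynomial_aeval a (1 + Polynomial.C (h : ℂ) * Polynomial.X)
    simpa [Algebra.smul_def] using this
  refine spectrum.spectralRadius_lt_of_forall_lt (r := 1) _ ?_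
  rw [hspec]
  rintro _ ⟨μ, hμ, rfl⟩
  have h1 : μ.re ≤ m.re := hmax hμ
  have h2 : ‖μ‖ ^ 2 ≤ R ^ 2 := by gcongr; exact hR μ hμ
  have h3 : ‖1 + (h : ℂ) * μ‖ ^ 2 = 1 + 2 * h * μ.re + h ^ 2 * ‖μ‖ ^ 2 := by
    rw [← Complex.normSq_eq_norm_sq, ← Complex.normSq_eq_norm_sq, Complex.normSq_apply,
      Complex.normSq_apply]
    simp
    ring
  have h4 : ‖1 + (h : ℂ) * μ‖ ^ 2 < 1 := by
    rw [h3]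
    nlinarith [mul_le_mul_of_nonneg_left h1 hpos.le, mul_le_mul_of_nonneg_left h2 (sq_nonneg h),
      mul_pos hpos hδ, mul_pos hpos hpos]
  have : ‖1 + (h : ℂ) * μ‖ < 1 := by nlinarith [norm_nonneg (1 + (h : ℂ) * μ)]
  exact_mod_cast this

/-! ### The quadratic Lyapunov function -/

section
attribute [local instance] Matrix.linftyOpNormedRing Matrix.linftyOpNormedAlgebra

/-- The Euler-step lemma for a real matrix, obtained by complexifying. The conclusion is entrywise,
so that it does not mention a choice of matrix norm. -/
theorem exists_real_euler_pow_tendsto_zero {n : ℕ} (A : Matrix (Fin n) (Fin n) ℝ)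
    (hstab : ∀ μ : ℂ, (Polynomial.aeval μ) (Matrix.charpoly A) = 0 → μ.re < 0) :
    ∃ h : ℝ, 0 < h ∧ ∀ i j, Tendsto (fun k : ℕ => ((1 + h • A) ^ k) i j) atTop (nhds 0) := by
  have hc : CompleteSpace (Matrix (Fin n) (Fin n) ℂ) := FiniteDimensional.complete ℂ _
  obtain ⟨h, hpos, hlim⟩ := exists_euler_pow_tendsto_zero (A.map (algebraMap ℝ ℂ)) (by
    intro μ hμ
    rw [Matrix.mem_spectrum_iff_isRoot_charpoly, Matrix.charpoly_map, Polynomial.IsRoot.def,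
      Polynomial.eval_map_algebraMap] at hμ
    exact hstab μ hμ)
  refine ⟨h, hpos, fun i j => ?_⟩
  have hpow : ∀ k : ℕ, (1 + (h : ℂ) • A.map (algebraMap ℝ ℂ)) ^ k
      = ((1 + h • A) ^ k).map (algebraMap ℝ ℂ) := by
    intro k
    rw [← RingHom.mapMatrix_apply, ← RingHom.mapMatrix_apply, map_pow, map_add, map_one]
    congr 2
    ext i j
    simp
  have h1 : Tendsto (fun k : ℕ => (((1 + h • A) ^ k) i j : ℂ)) atTop (nhds 0) := by
    rw [tendsto_zero_iff_norm_tendsto_zero]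
    refine squeeze_zero (fun _ => norm_nonneg _) (fun k => ?_)
      (tendsto_zero_iff_norm_tendsto_zero.mp hlim)
    rw [hpow, Matrix.linfty_opNorm_def]
    have h2 : ‖((1 + h • A) ^ k).map (algebraMap ℝ ℂ) i j‖₊ ≤
      (Finset.univ.sup fun i => ∑ j, ‖((1 + h • A) ^ k).map (algebraMap ℝ ℂ) i j‖₊) :=
      (Finset.single_le_sum (f := fun j => ‖((1 + h • A) ^ k).map (algebraMap ℝ ℂ) i j‖₊)
        (fun _ _ => zero_le) (Finset.mem_univ j)).trans
        (Finset.le_sup (f := fun i => ∑ j, ‖((1 + h • A) ^ k).map (algebraMap ℝ ℂ) i j‖₊)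
          (Finset.mem_univ i))
    exact NNReal.coe_le_coe.mpr h2
  simpa [Function.comp_def] using (Complex.continuous_re.tendsto 0).comp h1
end

/-- A matrix whose eigenvalues have negative real part is strictly dissipative for the inner product
`⟪P ·, ·⟫` of a suitable symmetric `P ≥ 1`. -/
theorem exists_lyapunov {n : ℕ} (A : Matrix (Fin n) (Fin n) ℝ)
    (hstab : ∀ μ : ℂ, (Polynomial.aeval μ) (Matrix.charpoly A) = 0 → μ.re < 0) :
    ∃ P : EuclideanSpace ℝ (Fin n) →L[ℝ] EuclideanSpace ℝ (Fin n), ∃ c : ℝ, 0 < c ∧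
      (∀ x y, inner ℝ (P x) y = inner ℝ (P y) x) ∧ (∀ x, ‖x‖ ^ 2 ≤ inner ℝ (P x) x) ∧
      ∀ x, inner ℝ (P x) (Matrix.toEuclideanLin A x) ≤ -c * ‖x‖ ^ 2 := by
  obtain ⟨h, hpos, hlim⟩ := exists_real_euler_pow_tendsto_zero A hstab
  set T : EuclideanSpace ℝ (Fin n) →L[ℝ] EuclideanSpace ℝ (Fin n) :=
    Matrix.toEuclideanCLM (n := Fin n) (𝕜 := ℝ) A with hT
  set B : EuclideanSpace ℝ (Fin n) →L[ℝ] EuclideanSpace ℝ (Fin n) := 1 + h • T with hB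
  have hBpow : Tendsto (fun k : ℕ => B ^ k) atTop (nhds 0) := by
    have h1 : Tendsto (fun k : ℕ => (1 + h • A) ^ k) atTop (nhds 0) :=
      tendsto_pi_nhds.mpr fun i => tendsto_pi_nhds.mpr fun j => hlim i j
    let Φ := (Matrix.toEuclideanCLM (n := Fin n) (𝕜 := ℝ)).toAlgEquiv.toLinearMap
    have h2 : Continuous Φ := LinearMap.continuous_of_finiteDimensional Φ
    have h3 := (h2.tendsto 0).comp h1
    rw [map_zero] at h3
    refine h3.congr fun k => ?_
    simp [Φ, hB, hT, map_pow]
  obtain ⟨N, hN0, hN⟩ : ∃ N : ℕ, 0 < N ∧ ‖B ^ N‖ < 1 / 2 := by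
    have h1 := (tendsto_zero_iff_norm_tendsto_zero.mp hBpow).eventually_lt_const
      (show (0 : ℝ) < 1 / 2 by norm_num)
    obtain ⟨N, h2, h3⟩ := (h1.and (eventually_gt_atTop 0)).exists
    exact ⟨N, h3, h2⟩
  set P : EuclideanSpace ℝ (Fin n) →L[ℝ] EuclideanSpace ℝ (Fin n) :=
    ∑ k ∈ Finset.range N, (ContinuousLinearMap.adjoint (B ^ k)) * (B ^ k) with hP
  have hPin : ∀ x y, inner ℝ (P x) y = ∑ k ∈ Finset.range N, inner ℝ ((B ^ k) x) ((B ^ k) y) := by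
    intro x y
    simp [hP, sum_inner, ContinuousLinearMap.adjoint_inner_left]
  have hsymm : ∀ x y, inner ℝ (P x) y = inner ℝ (P y) x := by
    intro x y
    rw [hPin, hPin]
    exact Finset.sum_congr rfl fun k _ => real_inner_comm _ _
  have hpsd : ∀ x, 0 ≤ inner ℝ (P x) x := by
    intro x
    rw [hPin]
    exact Finset.sum_nonneg fun k _ => real_inner_self_nonneg
  -- telescoping: `⟪P B x, B x⟫ = ⟪P x, x⟫ - ‖x‖² + ‖Bᴺ x‖²`
  have htel : ∀ x, inner ℝ (P (B x)) (B x) = inner ℝ (P x) x - ‖x‖ ^ 2 + ‖(B ^ N) x‖ ^ 2 := by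
    intro x
    rw [hPin, hPin]
    have e1 : ∀ k, inner ℝ ((B ^ k) (B x)) ((B ^ k) (B x)) = ‖(B ^ (k + 1)) x‖ ^ 2 := by
      intro k
      rw [real_inner_self_eq_norm_sq, pow_succ]
      rfl
    simp only [e1]
    simp only [real_inner_self_eq_norm_sq]
    have := Finset.sum_range_sub (fun k => ‖(B ^ k) x‖ ^ 2) N
    rw [Finset.sum_sub_distrib] at this
    simp only [pow_zero, one_apply_eq_self] at this
    linarith
  refine ⟨P, 3 / (8 * h), by positivity, hsymm, ?_, ?_⟩
  · intro x
    rw [hPin]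
    have := Finset.single_le_sum (f := fun k => inner ℝ ((B ^ k) x) ((B ^ k) x))
      (fun k _ => real_inner_self_nonneg) (Finset.mem_range.mpr hN0)
    simpa using this
  · intro x
    change inner ℝ (P x) (T x) ≤ _
    have h1 := htel x
    have h2 : ‖(B ^ N) x‖ ≤ 1 / 2 * ‖x‖ := (B ^ N).le_of_opNorm_le hN.le x
    have h3 : ‖(B ^ N) x‖ ^ 2 ≤ 1 / 4 * ‖x‖ ^ 2 := by nlinarith [norm_nonneg ((B ^ N) x)]
    have h4 : B x = x + h • T x := by simp [hB]
    have h5 : inner ℝ (P (B x)) (B x)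
        = inner ℝ (P x) x + 2 * h * inner ℝ (P x) (T x) + h ^ 2 * inner ℝ (P (T x)) (T x) := by
      rw [h4]
      simp only [map_add, map_smul, inner_add_left, inner_add_right, inner_smul_left,
        inner_smul_right, hsymm (T x) x]
      simp
      ring
    have h6 := hpsd (T x)
    have h7 : 2 * h * inner ℝ (P x) (T x) ≤ -(3 / 4) * ‖x‖ ^ 2 := by nlinarith [sq_nonneg h]
    have h8 : -(3 / (8 * h)) * ‖x‖ ^ 2 = (-(3 / 4) * ‖x‖ ^ 2) / (2 * h) := by field_simp; ring
    rw [h8, le_div_iff₀ (by positivity)]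
    linarith

/-! ### Global solutions of globally Lipschitz equations -/

section ODE
variable {E : Type*} [NormedAddCommGroup E] [NormedSpace ℝ E]

theorem ode_eqOn_Ioo {v : ℝ → E → E} {K : NNReal} (hv : ∀ t, LipschitzWith K (v t))
    {x y : ℝ → E} {a b s : ℝ} (hs : s ∈ Set.Ioo a b)
    (hx : ∀ t ∈ Set.Ioo a b, HasDerivAt x (v t (x t)) t)
    (hy : ∀ t ∈ Set.Ioo a b, HasDerivAt y (v t (y t)) t) (hxy : x s = y s) :
    Set.EqOn x y (Set.Ioo a b) :=
  ODE_solution_unique_of_mem_Ioo (s := fun _ => Set.univ)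
    (fun t _ => (hv t).lipschitzOnWith) hs (fun t ht => ⟨hx t ht, trivial⟩)
    (fun t ht => ⟨hy t ht, trivial⟩) hxy

/-- Two solutions agreeing at `s` glue to a solution that follows `x` before `s` and `y` after `s`.
No order is required between the endpoints `b` and `d`, or `a` and `c`. -/
theorem ode_glue {v : ℝ → E → E} {K : NNReal} (hv : ∀ t, LipschitzWith K (v t))
    {x y : ℝ → E} {a b c d s : ℝ} (hs : s ∈ Set.Ioo a b) (hs' : s ∈ Set.Ioo c d)
    (hx : ∀ t ∈ Set.Ioo a b, HasDerivAt x (v t (x t)) t)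
    (hy : ∀ t ∈ Set.Ioo c d, HasDerivAt y (v t (y t)) t) (hxy : x s = y s) :
    ∃ z : ℝ → E, (∀ t ∈ Set.Ioo a d, HasDerivAt z (v t (z t)) t) ∧
      (∀ t ≤ s, z t = x t) ∧ (∀ t, s ≤ t → z t = y t) := by
  classical
  set z : ℝ → E := fun t => if t < s then x t else y t with hz
  have hzl : ∀ t ≤ s, z t = x t := by
    intro t ht
    rcases ht.lt_or_eq with h | rfl
    · simp [hz, h]
    · simp [hz, hxy]
  have hzr : ∀ t, s ≤ t → z t = y t := by
    intro t ht
    simp [hz, not_lt.mpr ht]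
  refine ⟨z, ?_, hzl, hzr⟩
  intro t ht
  rcases lt_trichotomy t s with h | rfl | h
  · have he : z =ᶠ[nhds t] x := by
      filter_upwards [Iio_mem_nhds h] with u hu using hzl u (le_of_lt hu)
    rw [hzl t h.le]
    exact (hx t ⟨ht.1, h.trans hs.2⟩).congr_of_eventuallyEq he
  · have he : x =ᶠ[nhds t] y := ODE_solution_unique_of_eventually (s := fun _ => Set.univ)
      (Eventually.of_forall fun t => (hv t).lipschitzOnWith)
      (by filter_upwards [Ioo_mem_nhds hs.1 hs.2] with u hu using ⟨hx u hu, trivial⟩)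
      (by filter_upwards [Ioo_mem_nhds hs'.1 hs'.2] with u hu using ⟨hy u hu, trivial⟩) hxy
    have he : z =ᶠ[nhds t] x := by
      filter_upwards [he] with u hu
      rcases le_total u t with h | h
      · exact hzl u h
      · rw [hzr u h, hu]
    rw [hzl t le_rfl]
    exact (hx t hs).congr_of_eventuallyEq he
  · have he : z =ᶠ[nhds t] y := by
      filter_upwards [Ioi_mem_nhds h] with u hu using hzr u (le_of_lt hu)
    rw [hzr t h.le]
    exact (hy t ⟨hs'.1.trans h, ht.2⟩).congr_of_eventuallyEq he

/-- Local existence with a time step `2 * σ` that does not depend on the initial condition. -/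
theorem ode_local_uniform [CompleteSpace E] {v : ℝ → E → E} {K : NNReal}
    (hv : ∀ t, LipschitzWith K (v t)) (hc : ∀ x, Continuous fun t => v t x) :
    ∃ σ : ℝ, 0 < σ ∧ ∀ (t₀ : ℝ) (x₀ : E), ∃ x : ℝ → E, x t₀ = x₀ ∧
      ∀ t ∈ Set.Ioo (t₀ - 2 * σ) (t₀ + 2 * σ), HasDerivAt x (v t (x t)) t := by
  set σ : ℝ := 1 / (4 * (K + 1)) with hσ
  have hσ0 : 0 < σ := by positivity
  have hσK : σ * (4 * (K + 1)) = 1 := by rw [hσ]; field_simp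
  refine ⟨σ, hσ0, fun t₀ x₀ => ?_⟩
  obtain ⟨M, hM⟩ := (isCompact_Icc (a := t₀ - 2 * σ) (b := t₀ + 2 * σ)).exists_bound_of_continuousOn
    (hc x₀).continuousOn
  have hmem : t₀ ∈ Set.Icc (t₀ - 2 * σ) (t₀ + 2 * σ) := ⟨by linarith, by linarith⟩
  have hM0 : 0 ≤ M := (norm_nonneg _).trans (hM t₀ hmem)
  lift M to NNReal using hM0
  -- with radius `M`, the field is bounded by `M + K M`, and `2σ (M + K M) ≤ M`
  have hPL : IsPicardLindelof v (⟨t₀, hmem⟩ : Set.Icc (t₀ - 2 * σ) (t₀ + 2 * σ)) x₀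
      M 0 (M + K * M) K := by
    refine ⟨fun t _ => (hv t).lipschitzOnWith, fun x _ => (hc x).continuousOn, ?_, ?_⟩
    · intro t ht x hx
      have h1 := (hv t).dist_le_mul x x₀
      rw [dist_eq_norm] at h1
      have h2 : (K : ℝ) * dist x x₀ ≤ K * M :=
        mul_le_mul_of_nonneg_left (Metric.mem_closedBall.mp hx) K.2
      calc ‖v t x‖ = ‖v t x₀ + (v t x - v t x₀)‖ := by congr 1; abel
        _ ≤ ‖v t x₀‖ + ‖v t x - v t x₀‖ := norm_add_le _ _
        _ ≤ M + K * M := add_le_add (hM t ht) (h1.trans h2)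
        _ = ((M + K * M : NNReal) : ℝ) := by push_cast; ring
    · have : max (t₀ + 2 * σ - t₀) (t₀ - (t₀ - 2 * σ)) = 2 * σ := by
        rw [max_eq_left] <;> linarith
      simp only [this]
      push_cast
      have hM0 : (0 : ℝ) ≤ M := M.2
      nlinarith
  obtain ⟨x, hx0, hx⟩ := hPL.exists_eq_forall_mem_Icc_hasDerivWithinAt₀
  exact ⟨x, hx0, fun t ht => (hx t ⟨ht.1.le, ht.2.le⟩).hasDerivAt (Icc_mem_nhds ht.1 ht.2)⟩

theorem ode_exists_Ioo [CompleteSpace E] {v : ℝ → E → E} {K : NNReal}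
    (hv : ∀ t, LipschitzWith K (v t)) (hc : ∀ x, Continuous fun t => v t x)
    (t₀ : ℝ) (x₀ : E) (R : ℝ) : ∃ x : ℝ → E, x t₀ = x₀ ∧
      ∀ t ∈ Set.Ioo (t₀ - R) (t₀ + R), HasDerivAt x (v t (x t)) t := by
  obtain ⟨σ, hσ, hloc⟩ := ode_local_uniform hv hc
  have key : ∀ k : ℕ, ∃ x : ℝ → E, x t₀ = x₀ ∧
      ∀ t ∈ Set.Ioo (t₀ - (k + 1) * σ) (t₀ + (k + 1) * σ), HasDerivAt x (v t (x t)) t := by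
    intro k
    induction k with
    | zero =>
      obtain ⟨x, hx0, hx⟩ := hloc t₀ x₀
      refine ⟨x, hx0, fun t ht => hx t ⟨?_, ?_⟩⟩
      · have := ht.1; push_cast at this; linarith
      · have := ht.2; push_cast at this; linarith
    | succ k ih =>
      obtain ⟨x, hx0, hx⟩ := ih
      have hk : 0 ≤ k * σ := by positivity
      obtain ⟨y, hy0, hy⟩ := hloc (t₀ + k * σ) (x (t₀ + k * σ))
      obtain ⟨z, hz, hzl, hzr⟩ := ode_glue hv (s := t₀ + k * σ)
        ⟨by linarith, by linarith⟩ ⟨by linarith, by linarith⟩ hx hy hy0.symm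
      obtain ⟨w, hw0, hw⟩ := hloc (t₀ - k * σ) (z (t₀ - k * σ))
      obtain ⟨u, hu, hul, hur⟩ := ode_glue hv (s := t₀ - k * σ)
        ⟨by linarith, by linarith⟩ ⟨by linarith, by linarith⟩ hw hz hw0
      refine ⟨u, ?_, fun t ht => hu t ⟨?_, ?_⟩⟩
      · rw [hur t₀ (by linarith), hzl t₀ (by linarith), hx0]
      · have := ht.1; push_cast at this; linarith
      · have := ht.2; push_cast at this; linarith
  obtain ⟨k, hk⟩ := exists_nat_gt (R / σ)
  rw [div_lt_iff₀ hσ] at hk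
  obtain ⟨x, hx0, hx⟩ := key k
  exact ⟨x, hx0, fun t ht => hx t ⟨by linarith [ht.1], by linarith [ht.2]⟩⟩

theorem ode_exists_global [CompleteSpace E] {v : ℝ → E → E} {K : NNReal}
    (hv : ∀ t, LipschitzWith K (v t)) (hc : ∀ x, Continuous fun t => v t x)
    (t₀ : ℝ) (x₀ : E) : ∃ x : ℝ → E, x t₀ = x₀ ∧ ∀ t, HasDerivAt x (v t (x t)) t := by
  choose X hX0 hX using ode_exists_Ioo hv hc t₀ x₀
  have hagree : ∀ t R R', |t - t₀| < R → |t - t₀| < R' → X R t = X R' t := by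
    intro t R R' hR hR'
    have h0 : 0 < min R R' := (abs_nonneg _).trans_lt (lt_min hR hR')
    have ht := abs_lt.mp (lt_min hR hR')
    refine ode_eqOn_Ioo hv (s := t₀) (a := t₀ - min R R') (b := t₀ + min R R')
      ⟨by linarith, by linarith⟩ (fun u hu => hX R u ?_) (fun u hu => hX R' u ?_)
      (by rw [hX0, hX0]) ⟨by linarith, by linarith⟩
    · have := min_le_left R R'
      exact ⟨by linarith [hu.1], by linarith [hu.2]⟩
    · have := min_le_right R R'
      exact ⟨by linarith [hu.1], by linarith [hu.2]⟩
  refine ⟨fun t => X (|t - t₀| + 1) t, hX0 _, fun t => ?_⟩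
  have ht : |t - t₀| < |t - t₀| + 1 := by linarith
  have he : (fun t => X (|t - t₀| + 1) t) =ᶠ[nhds t] X (|t - t₀| + 1) := by
    have : ∀ᶠ u in nhds t, |u - t₀| < |t - t₀| + 1 :=
      (continuous_abs.comp (continuous_id.sub continuous_const)).continuousAt.eventually_lt
        continuousAt_const ht
    filter_upwards [this] with u hu
    exact hagree u _ _ (by linarith) hu
  have ht' := abs_lt.mp ht
  exact (hX _ t ⟨by linarith, by linarith⟩).congr_of_eventuallyEq he

/-- Grönwall's inequality backward in time, by time reversal. -/
theorem ode_dist_backward {v : ℝ → E → E} {K : NNReal} (hv : ∀ t, LipschitzWith K (v t))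
    {x y : ℝ → E} (hx : ∀ t, HasDerivAt x (v t (x t)) t) (hy : ∀ t, HasDerivAt y (v t (y t)) t)
    {s T : ℝ} (hsT : s ≤ T) : dist (x s) (y s) ≤ dist (x T) (y T) * Real.exp (K * (T - s)) := by
  have hrev : ∀ z : ℝ → E, (∀ t, HasDerivAt z (v t (z t)) t) →
      ∀ t, HasDerivAt (fun t => z (-t)) (-v (-t) (z (-t))) t := by
    intro z hz t
    have := (hz (-t)).scomp t (hasDerivAt_neg t)
    simpa [Function.comp_def] using this
  have hw : ∀ t, LipschitzWith K (fun z => -v (-t) z) := fun t =>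
    LipschitzWith.of_dist_le_mul fun a b => by
      simpa [dist_neg_neg] using (hv (-t)).dist_le_mul a b
  have := dist_le_of_trajectories_ODE (a := -T) (b := -s) (v := fun t z => -v (-t) z) hw
    (f := fun t => x (-t)) (g := fun t => y (-t)) (δ := dist (x T) (y T))
    (fun t _ => (hrev x hx t).continuousAt.continuousWithinAt)
    (fun t _ => (hrev x hx t).hasDerivWithinAt)
    (fun t _ => (hrev y hy t).continuousAt.continuousWithinAt)
    (fun t _ => (hrev y hy t).hasDerivWithinAt) (by simp) (-s) ⟨by linarith, le_rfl⟩
  simpa [sub_eq_add_neg, add_comm] using this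

end ODE

/-! ### Lyapunov functions along solutions -/

/-- Up to time `T`, a function cannot cross upward a level at which its derivative is negative. -/
theorem le_of_drift_neg {w w' : ℝ → ℝ} (hw : ∀ t, HasDerivAt w (w' t) t) {s T η : ℝ}
    (hneg : ∀ t ≤ T, w t = η → w' t < 0) (hs : w s ≤ η) : ∀ t, s ≤ t → t ≤ T → w t ≤ η := by
  intro t hst htT
  refine image_le_of_deriv_right_lt_deriv_boundary (f := w) (f' := w') (a := s) (b := t)
    (B := fun _ => η) (B' := fun _ => 0)
    (fun u _ => (hw u).continuousAt.continuousWithinAt) (fun u _ => (hw u).hasDerivWithinAt)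
    hs (fun u => hasDerivAt_const u η) (fun u hu h => hneg u (hu.2.le.trans htT) h) ⟨hst, le_rfl⟩

/-- A function bounded above on the past that decreases at a definite rate whenever it is at least
`η` never exceeds `η`: otherwise it would grow linearly backward in time. -/
theorem le_of_drift_neg_of_bounded_past {w w' : ℝ → ℝ} (hw : ∀ t, HasDerivAt w (w' t) t)
    {T η r κ : ℝ} (hκ : 0 < κ) (hr : ∀ t ≤ T, w t ≤ r)
    (hneg : ∀ t ≤ T, η ≤ w t → w' t ≤ -κ) : ∀ t ≤ T, w t ≤ η := by
  intro t₀ ht₀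
  by_contra! hlt
  have habove : ∀ s ≤ t₀, η < w s := by
    intro s hs
    by_contra! hle
    exact absurd (le_of_drift_neg hw
      (fun t ht h => (hneg t ht h.ge).trans_lt (neg_lt_zero.mpr hκ)) hle t₀ hs ht₀) (not_le.mpr hlt)
  have hgrow : ∀ s ≤ t₀, w t₀ + κ * (t₀ - s) ≤ w s := by
    intro s hs
    have hder : ∀ t, HasDerivAt (fun t => w t + κ * t) (w' t + κ) t := fun t => by
      simpa using (hw t).fun_add ((hasDerivAt_id t).const_mul κ)
    have hanti : AntitoneOn (fun t => w t + κ * t) (Set.Iic t₀) := by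
      refine antitoneOn_of_hasDerivWithinAt_nonpos (f' := fun t => w' t + κ) (convex_Iic t₀)
        (fun t _ => (hder t).continuousAt.continuousWithinAt)
        (fun t _ => (hder t).hasDerivWithinAt) (fun t ht => ?_)
      rw [interior_Iic] at ht
      have ht' : t ≤ t₀ := le_of_lt ht
      linarith [hneg t (ht'.trans ht₀) (habove t ht').le]
    have := hanti (Set.mem_Iic.mpr hs) (Set.mem_Iic.mpr le_rfl) hs
    simp only at this
    linarith
  -- at time `t₀ - (r - w t₀ + 1) / κ` the lower bound is `r + 1`
  have h0 : 0 ≤ (r - w t₀ + 1) / κ := div_nonneg (by linarith [hr t₀ ht₀]) hκ.le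
  have h1 := hgrow (t₀ - (r - w t₀ + 1) / κ) (by linarith)
  have h2 := hr (t₀ - (r - w t₀ + 1) / κ) (by linarith)
  have h3 : κ * (t₀ - (t₀ - (r - w t₀ + 1) / κ)) = r - w t₀ + 1 := by field_simp; ring
  linarith

/-- Existence of a solution converging to `X₀` in the past from a Lyapunov function `W` with
derivative `D` along solutions, by compactness of the sets of endpoints at a fixed time. -/
theorem exists_pullback_of_lyapunov {E : Type*} [NormedAddCommGroup E] [NormedSpace ℝ E]
    [ProperSpace E] {v : ℝ → E → E} {K : NNReal}
    (hv : ∀ t, LipschitzWith K (v t)) (hc : ∀ x, Continuous fun t => v t x)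
    {W : E → ℝ} {D : ℝ → E → ℝ} {X₀ : E} {r : ℝ} (hr : 0 < r)
    (hWc : Continuous W) (hW0 : W X₀ = 0) (hcoer : ∀ x, ‖x - X₀‖ ^ 2 ≤ W x)
    (hWD : ∀ x : ℝ → E, (∀ t, HasDerivAt x (v t (x t)) t) →
      ∀ t, HasDerivAt (fun t => W (x t)) (D t (x t)) t)
    (hdrift : ∀ η > 0, ∃ T : ℝ, ∃ κ > 0, ∀ t ≤ T, ∀ x, η ≤ W x → W x ≤ r → D t x ≤ -κ) :
    ∃ x : ℝ → E, (∀ t, HasDerivAt x (v t (x t)) t) ∧ Tendsto x atBot (nhds X₀) := by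
  have : CompleteSpace E := inferInstance
  obtain ⟨T, κ, hκ, hT⟩ := hdrift r hr
  choose X hX0 hX using ode_exists_global hv hc T
  have hinv : ∀ x : ℝ → E, (∀ t, HasDerivAt x (v t (x t)) t) → ∀ s t, s ≤ t → t ≤ T →
      W (x s) ≤ r → W (x t) ≤ r := fun x hx s t hst htT hs =>
    le_of_drift_neg (hWD x hx)
      (fun u hu h => (hT u hu _ h.ge h.le).trans_lt (neg_lt_zero.mpr hκ)) hs t hst htT
  have hcont : ∀ s ≤ T, Continuous fun p => X p s := by
    intro s hs
    refine (LipschitzWith.of_dist_le_mul (K := ⟨Real.exp (K * (T - s)), (Real.exp_pos _).le⟩)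
      fun p q => ?_).continuous
    have := ode_dist_backward hv (hX p) (hX q) hs
    rw [hX0, hX0, mul_comm] at this
    exact this
  -- endpoints at time `T` whose backward orbit is in the sublevel set at time `T - k`
  set S : ℕ → Set E := fun k => {p | W (X p (T - k)) ≤ r} with hS
  have hScl : ∀ k, IsClosed (S k) := fun k =>
    isClosed_le (hWc.comp (hcont _ (by linarith [Nat.cast_nonneg (α := ℝ) k]))) continuous_const
  have hSanti : ∀ k, S (k + 1) ⊆ S k := fun k p hp =>
    hinv (X p) (hX p) _ _ (by push_cast; linarith) (by linarith [Nat.cast_nonneg (α := ℝ) k]) hp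
  have hSne : ∀ k, (S k).Nonempty := by
    intro k
    obtain ⟨y, hy0, hy⟩ := ode_exists_global hv hc (T - k) X₀
    refine ⟨y T, ?_⟩
    have : X (y T) = y := ODE_solution_unique_univ (s := fun _ => Set.univ) (t₀ := T)
      (fun t => (hv t).lipschitzOnWith) (fun t => ⟨hX _ t, trivial⟩) (fun t => ⟨hy t, trivial⟩)
      (hX0 _)
    simp [hS, this, hy0, hW0, hr.le]
  have hScpt : IsCompact (S 0) := by
    refine Metric.isCompact_of_isClosed_isBounded (hScl 0)
      ((Metric.isBounded_closedBall (x := X₀) (r := Real.sqrt r)).subset fun p hp => ?_)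
    have h1 : W p ≤ r := by simpa [hS, hX0] using hp
    rw [Metric.mem_closedBall, dist_eq_norm]
    exact Real.le_sqrt_of_sq_le ((hcoer p).trans h1)
  obtain ⟨p, hp⟩ := IsCompact.nonempty_iInter_of_sequence_nonempty_isCompact_isClosed S hSanti
    hSne hScpt hScl
  rw [Set.mem_iInter] at hp
  have hpast : ∀ t ≤ T, W (X p t) ≤ r := by
    intro t ht
    obtain ⟨k, hk⟩ := exists_nat_ge (T - t)
    exact hinv (X p) (hX p) (T - k) t (by linarith) ht (hp k)
  refine ⟨X p, hX p, ?_⟩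
  rw [Metric.tendsto_nhds]
  intro ε hε
  obtain ⟨T', κ', hκ', hT'⟩ := hdrift (ε ^ 2 / 4) (by positivity)
  have hle := le_of_drift_neg_of_bounded_past (hWD _ (hX p)) (T := min T T') hκ'
    (fun t ht => hpast t (ht.trans (min_le_left _ _)))
    (fun t ht h => hT' t (ht.trans (min_le_right _ _)) _ h (hpast t (ht.trans (min_le_left _ _))))
  filter_upwards [eventually_le_atBot (min T T')] with t ht
  have h1 := (hcoer (X p t)).trans (hle t ht)
  rw [dist_eq_norm]
  nlinarith [norm_nonneg (X p t - X₀)]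

/-- Along `ẋ = f (x, Λ t)`, half the derivative of `⟪P (x - X₀), x - X₀⟫` is at most a
negative constant on every shell `η ≤ ⟪P (x - X₀), x - X₀⟫ ≤ r`, at early times. -/
theorem exists_drift {E : Type*} [NormedAddCommGroup E] [InnerProductSpace ℝ E] [ProperSpace E]
    {f : E → ℝ → E} (hfc : Continuous fun p : E × ℝ => f p.1 p.2) {Λ : ℝ → ℝ} {lamm : ℝ}
    (hΛ : Tendsto Λ atBot (nhds lamm)) {X₀ : E} (hX : f X₀ lamm = 0) {A : E →L[ℝ] E}
    (hA : HasFDerivAt (fun x => f x lamm) A X₀) {P : E →L[ℝ] E} {c : ℝ} (hc : 0 < c)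
    (hcoer : ∀ x, ‖x‖ ^ 2 ≤ inner ℝ (P x) x) (hPA : ∀ x, inner ℝ (P x) (A x) ≤ -c * ‖x‖ ^ 2) :
    ∃ r > 0, ∀ η > 0, ∃ T : ℝ, ∃ κ > 0, ∀ t ≤ T, ∀ x, η ≤ inner ℝ (P (x - X₀)) (x - X₀) →
      inner ℝ (P (x - X₀)) (x - X₀) ≤ r → inner ℝ (P (x - X₀)) (f x (Λ t)) ≤ -κ := by
  set C : ℝ := ‖P‖ + 1 with hC
  have hC0 : 0 < C := by positivity
  have hPle : ∀ x y, inner ℝ (P x) y ≤ C * ‖x‖ * ‖y‖ := by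
    intro x y
    refine (real_inner_le_norm _ _).trans (mul_le_mul_of_nonneg_right ?_ (norm_nonneg _))
    exact (P.le_opNorm x).trans (mul_le_mul_of_nonneg_right (by linarith) (norm_nonneg _))
  obtain ⟨ρ, hρ, hlin⟩ : ∃ ρ > 0, ∀ x, ‖x - X₀‖ ≤ ρ →
      ‖f x lamm - A (x - X₀)‖ ≤ c / (2 * C) * ‖x - X₀‖ := by
    have h1 := hA.isLittleO.def (show 0 < c / (2 * C) by positivity)
    obtain ⟨ρ, hρ, h2⟩ := Metric.nhds_basis_closedBall.eventually_iff.mp h1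
    refine ⟨ρ, hρ, fun x hx => ?_⟩
    have := h2 (show x ∈ Metric.closedBall X₀ ρ by simpa [dist_eq_norm] using hx)
    simpa [hX] using this
  refine ⟨ρ ^ 2, by positivity, fun η hη => ?_⟩
  -- this `δ` satisfies `C * δ ≤ (c / 4) * ‖y‖` whenever `η ≤ C * ‖y‖ ^ 2`
  set δ : ℝ := c / (4 * C) * Real.sqrt (η / C) with hδ
  have hδ0 : 0 < δ := by positivity
  have hunif : ∀ᶠ lam in nhds lamm, ∀ x ∈ Metric.closedBall X₀ ρ, ‖f x lam - f x lamm‖ < δ := by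
    refine (isCompact_closedBall X₀ ρ).eventually_forall_of_forall_eventually fun x _ => ?_
    have hcont : Continuous fun p : ℝ × E => ‖f p.2 p.1 - f p.2 lamm‖ :=
      ((hfc.comp (continuous_snd.prodMk continuous_fst)).sub
        (hfc.comp (continuous_snd.prodMk continuous_const))).norm
    exact hcont.continuousAt.eventually_lt continuousAt_const (by simpa using hδ0)
  obtain ⟨T, hT⟩ := eventually_atBot.mp (hΛ.eventually hunif)
  refine ⟨T, c * η / (4 * C), by positivity, fun t ht x hη' hr => ?_⟩
  set y := x - X₀ with hy
  have hyρ : ‖y‖ ≤ ρ := by nlinarith [hcoer y, norm_nonneg y]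
  have hyη : η / C ≤ ‖y‖ ^ 2 := by
    rw [div_le_iff₀ hC0]
    nlinarith [hPle y y]
  have hyδ : C * δ ≤ c / 4 * ‖y‖ := by
    have h1 : Real.sqrt (η / C) ≤ ‖y‖ := Real.sqrt_le_iff.mpr ⟨norm_nonneg _, hyη⟩
    have h2 : C * δ = c / 4 * Real.sqrt (η / C) := by rw [hδ]; field_simp
    rw [h2]
    gcongr
  have e1 : f x (Λ t) = A y + ((f x lamm - A y) + (f x (Λ t) - f x lamm)) := by abel
  have h2 := hlin x hyρ
  have h3 : ‖f x (Λ t) - f x lamm‖ < δ := hT t ht x (by simpa [dist_eq_norm] using hyρ)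
  have h4 := hPle y ((f x lamm - A y) + (f x (Λ t) - f x lamm))
  have h5 : ‖(f x lamm - A y) + (f x (Λ t) - f x lamm)‖ ≤ c / (2 * C) * ‖y‖ + δ :=
    (norm_add_le _ _).trans (add_le_add h2 h3.le)
  have h6 : C * ‖y‖ * ‖(f x lamm - A y) + (f x (Λ t) - f x lamm)‖
      ≤ C * ‖y‖ * (c / (2 * C) * ‖y‖ + δ) := by gcongr
  have h7 : C * ‖y‖ * (c / (2 * C) * ‖y‖ + δ) = c / 2 * ‖y‖ ^ 2 + C * δ * ‖y‖ := by
    field_simp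
  have h8 : C * δ * ‖y‖ ≤ c / 4 * ‖y‖ * ‖y‖ := by gcongr
  have h9 : c * η / (4 * C) ≤ c / 4 * ‖y‖ ^ 2 := by
    rw [show c * η / (4 * C) = c / 4 * (η / C) by field_simp]
    gcongr
  rw [e1, inner_add_right]
  nlinarith [hPA y]

/-- Existence of a pullback attracting solution: for the parameter shift system
`ẋ = f(x, Λ(t))` with `Λ(t) → λ₋` as `t → -∞`, if `X₋` is an equilibrium of the
past limit system `ẋ = f(x, λ₋)` whose Jacobian matrix `A` has all its complex
eigenvalues with strictly negative real part, then there is a whole-line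
solution of the nonautonomous system converging to `X₋` as `t → -∞`. -/
theorem exists_pullback_solution_limiting_to_stable_equilibrium
    (n : ℕ)
    (f : EuclideanSpace ℝ (Fin n) → ℝ → EuclideanSpace ℝ (Fin n))
    (hfc : Continuous fun p : EuclideanSpace ℝ (Fin n) × ℝ => f p.1 p.2)
    (hfd : ∀ lam : ℝ, ContDiff ℝ 1 (fun x => f x lam))
    (L : NNReal) (hfl : ∀ lam : ℝ, LipschitzWith L (fun x => f x lam))
    (Λ : ℝ → ℝ) (hΛc : Continuous Λ)
    (lamm : ℝ) (hΛlim : Tendsto Λ atBot (nhds lamm))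
    (Xm : EuclideanSpace ℝ (Fin n)) (hXm : f Xm lamm = 0)
    (A : Matrix (Fin n) (Fin n) ℝ)
    (hA : HasFDerivAt (fun x => f x lamm)
      (LinearMap.toContinuousLinearMap (Matrix.toEuclideanLin A)) Xm)
    (hstab : ∀ μ : ℂ, (Polynomial.aeval μ) (Matrix.charpoly A) = 0 → μ.re < 0) :
    ∃ x : ℝ → EuclideanSpace ℝ (Fin n),
      (∀ t : ℝ, HasDerivAt x (f (x t) (Λ t)) t) ∧
        Tendsto x atBot (nhds Xm) := by
  obtain ⟨P, c, hc, hsymm, hcoer, hPA⟩ := exists_lyapunov A hstab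
  obtain ⟨r, hr, hdrift⟩ := exists_drift hfc hΛlim hXm hA hc hcoer hPA
  refine exists_pullback_of_lyapunov (v := fun t x => f x (Λ t)) (fun t => hfl (Λ t))
    (fun x => hfc.comp (continuous_const.prodMk hΛc))
    (W := fun x => inner ℝ (P (x - Xm)) (x - Xm))
    (D := fun t x => 2 * inner ℝ (P (x - Xm)) (f x (Λ t))) hr (by fun_prop) (by simp)
    (fun x => hcoer _) (fun x hx t => ?_) (fun η hη => ?_)
  · have h1 := (hx t).sub_const Xm
    have h2 := (P.hasFDerivAt.comp_hasDerivAt t h1).inner ℝ h1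
    refine h2.congr_deriv ?_
    simp only [Function.comp_apply]
    rw [hsymm (f (x t) (Λ t))]
    ring
  · obtain ⟨T, κ, hκ, h⟩ := hdrift η hη
    exact ⟨T, κ, hκ, fun t ht x h1 h2 => by linarith [h t ht x h1 h2]⟩
end
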